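/- The profile Φ satisfies the equation σ (𝓛Φ)(x) = N Φ(x) + x · ∇Φ(x) for every x ∈ ℝ^N. -/

import Mathlib

open MeasureTheory Metric Real Set
open scoped InnerProductSpace ENNReal

noncomputable section

/-- `ℝ^N` as a Euclidean space. -/
abbrev Eu (N : ℕ) := EuclideanSpace ℝ (Fin N)

/-- The unit sphere `𝕊^{N-1} ⊂ ℝ^N`. -/
abbrev Sph (N : ℕ) := Metric.sphere (0 : Eu N) 1

/-- The surface measure `dθ` on the unit sphere. -/
def sphMeas (N : ℕ) : Measure (Sph N) := (volume : Measure (Eu N)).toSphere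

/-- The stable operator `𝓛` associated to the order `σ` and the spectral measure `μ`:
`𝓛u(x) = ∫_{𝕊^{N−1}} ∫_0^∞ (u(x) − (u(x+rθ)+u(x−rθ))/2) r^{−1−σ} dr dμ(θ)`. -/
def Lop (N : ℕ) (σ : ℝ) (μ : Measure (Sph N)) (u : Eu N → ℝ) (x : Eu N) : ℝ :=
  ∫ θ : Sph N, (∫ r in Ioi (0 : ℝ),
    (u x - (u (x + r • (θ : Eu N)) + u (x - r • (θ : Eu N))) / 2) * r ^ (-1 - σ)) ∂μ

/-- The ellipticity (non-degeneracy) condition on the spectral measure. -/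
def Elliptic (N : ℕ) (σ : ℝ) (μ : Measure (Sph N)) (lam : ℝ) : Prop :=
  ∀ ζ : Sph N, lam ≤ ∫ θ : Sph N, |⟪(ζ : Eu N), (θ : Eu N)⟫_ℝ| ^ σ ∂μ

/-- The weight `ρ(x) = (1+|x|)^{−(N+σ)}`. -/
def wt (N : ℕ) (σ : ℝ) (x : Eu N) : ℝ := (1 + ‖x‖) ^ (-((N : ℝ) + σ))

/-- `u ∈ L¹_loc([0,∞); L_ρ)`. -/
def L1locRho (N : ℕ) (σ : ℝ) (u : Eu N → ℝ → ℝ) : Prop :=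
  ∀ T > 0, IntegrableOn (fun q : Eu N × ℝ => u q.1 q.2 * wt N σ q.1)
    ((univ : Set (Eu N)) ×ˢ Ioo (0 : ℝ) T) volume

/-- Very weak solution of `∂ₜu + 𝓛u = 𝓛f` in `Q = ℝ^N × (0,∞)` with initial datum `u₀`:
`∫_Q u ∂ₜζ + ∫ u₀ ζ(·,0) = ∫_Q (u−f) 𝓛ζ` for all `ζ ∈ C_c^∞(ℝ^N × [0,∞))`. -/
def IsVeryWeakSol (N : ℕ) (σ : ℝ) (μ : Measure (Sph N)) (f : Eu N → ℝ → ℝ)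
    (u0 : Eu N → ℝ) (u : Eu N → ℝ → ℝ) : Prop :=
  L1locRho N σ u ∧
  ∀ ζ : Eu N × ℝ → ℝ, ContDiff ℝ (⊤ : ℕ∞) ζ → HasCompactSupport ζ →
    (∫ q : Eu N × ℝ in (univ : Set (Eu N)) ×ˢ Ioi (0 : ℝ),
        u q.1 q.2 * deriv (fun s => ζ (q.1, s)) q.2)
      + (∫ x : Eu N, u0 x * ζ (x, 0))
    = ∫ q : Eu N × ℝ in (univ : Set (Eu N)) ×ˢ Ioi (0 : ℝ),
        (u q.1 q.2 - f q.1 q.2) * Lop N σ μ (fun y => ζ (y, q.2)) q.1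

/-- The multiplier `m(ξ)` of `𝓛`. -/
def symb (N : ℕ) (σ : ℝ) (μ : Measure (Sph N)) (ξ : Eu N) : ℝ :=
  ∫ θ : Sph N, (∫ r in Ioi (0 : ℝ),
    (1 - Real.cos (r * ⟪ξ, (θ : Eu N)⟫_ℝ)) * r ^ (-1 - σ)) ∂μ

/-- `𝓛^kΦ`, the inverse Fourier transform of `m(ξ)^k e^{−m(ξ)}`; `k = 0` gives the
heat-kernel profile `Φ`. -/
def LkPhi (N : ℕ) (σ : ℝ) (μ : Measure (Sph N)) (k : ℕ) (x : Eu N) : ℝ :=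
  (2 * π) ^ (-(N : ℝ)) *
    (∫ ξ : Eu N, ((symb N σ μ ξ ^ k * Real.exp (-symb N σ μ ξ) : ℝ) : ℂ) *
        Complex.exp (Complex.I * (⟪x, ξ⟫_ℝ : ℂ))).re

/-- The heat kernel `P(x,t) = t^{−N/σ} Φ(x t^{−1/σ})`. -/
def heatK (N : ℕ) (σ : ℝ) (μ : Measure (Sph N)) (x : Eu N) (t : ℝ) : ℝ :=
  t ^ (-(N : ℝ) / σ) * LkPhi N σ μ 0 ((t ^ (-(1 : ℝ) / σ)) • x)

/-- `𝓛P(x,t) = t^{−N/σ−1} (𝓛Φ)(x t^{−1/σ})`. -/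
def LheatK (N : ℕ) (σ : ℝ) (μ : Measure (Sph N)) (x : Eu N) (t : ℝ) : ℝ :=
  t ^ (-(N : ℝ) / σ - 1) * LkPhi N σ μ 1 ((t ^ (-(1 : ℝ) / σ)) • x)

/-- The σ-parabolic norm `|(x,t)|_σ = (|x|² + |t|^{2/σ})^{1/2}`. -/
def pnorm (N : ℕ) (σ : ℝ) (x : Eu N) (t : ℝ) : ℝ := Real.sqrt (‖x‖ ^ 2 + |t| ^ (2 / σ))

/-- `f ∈ C^α_σ(Q)` with Hölder constant `c`. -/
def HolderSigma (N : ℕ) (σ α c : ℝ) (f : Eu N → ℝ → ℝ) : Prop :=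
  ∀ x t x' t', 0 < t → 0 < t' → |f x t - f x' t'| ≤ c * pnorm N σ (x - x') (t - t') ^ α

/-!
Put `P_k(x, t) = (𝓛^k P)(x, t)`, the inverse Fourier transform of `m^k e^{-tm}`.  Differentiating
under the integral gives `∂ₜ P_k = -P_{k+1}`, while the homogeneity of `m` turns the substitution
`ξ ↦ t^{1/σ} ξ` into the self-similarity `P_k(x, t) = t^{-N/σ-k} P_k(x t^{-1/σ}, 1)`.  Computing
`∂ₜ P_k` at `t = 1` in these two ways yields the equation for `𝓛^k Φ`.
-/

section HeatSymbol

variable {α F : Type*} {m : α → ℝ}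

/-- The Fourier symbol `m^k e^{-tm}` of the operator `𝓛^k e^{-t𝓛}`, where `m` is the symbol of
`𝓛`. -/
def heatSymbol (m : α → ℝ) (k : ℕ) (t : ℝ) (a : α) : ℝ :=
  m a ^ k * Real.exp (-(t * m a))

theorem heatSymbol_zero (m : α → ℝ) (t : ℝ) (a : α) :
    heatSymbol m 0 t a = Real.exp (-(t * m a)) := by
  rw [heatSymbol, pow_zero, one_mul]

theorem hasDerivAt_heatSymbol (m : α → ℝ) (k : ℕ) (t : ℝ) (a : α) :
    HasDerivAt (fun s => heatSymbol m k s a) (-heatSymbol m (k + 1) t a) t := by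
  have h : HasDerivAt (fun s => -(s * m a)) (-m a) t := (hasDerivAt_mul_const (m a)).neg
  exact (h.exp.const_mul (m a ^ k)).congr_deriv (by rw [heatSymbol]; ring)

theorem heatSymbol_nonneg {a : α} (ha : 0 ≤ m a) (k : ℕ) (t : ℝ) : 0 ≤ heatSymbol m k t a :=
  mul_nonneg (pow_nonneg ha k) (Real.exp_pos _).le

theorem heatSymbol_anti {a : α} (ha : 0 ≤ m a) (k : ℕ) {s t : ℝ} (hst : s ≤ t) :
    heatSymbol m k t a ≤ heatSymbol m k s a := by
  unfold heatSymbol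
  gcongr

variable [MeasurableSpace α] {ν : Measure α}

theorem neg_mem_interior_integrableExpSet
    (hm : ∀ t > 0, Integrable (heatSymbol m 0 t) ν) {t : ℝ} (ht : 0 < t) :
    -t ∈ interior (ProbabilityTheory.integrableExpSet m ν) := by
  refine interior_maximal (fun s hs => ?_) isOpen_Iio (neg_lt_zero.2 ht)
  simpa [ProbabilityTheory.integrableExpSet, funext (heatSymbol_zero m (-s))] using
    hm (-s) (neg_pos.2 hs)

theorem integrable_rpow_abs_mul_heatSymbol (hm : ∀ t > 0, Integrable (heatSymbol m 0 t) ν)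
    {p : ℝ} (hp : 0 ≤ p) (k : ℕ) {t : ℝ} (ht : 0 < t) :
    Integrable (fun a => |m a| ^ p * heatSymbol m k t a) ν := by
  have hint := neg_mem_interior_integrableExpSet hm ht
  have hmeas := ProbabilityTheory.aemeasurable_of_mem_interior_integrableExpSet hint
  refine (ProbabilityTheory.integrable_rpow_abs_mul_exp_of_mem_interior_integrableExpSet hint
    (add_nonneg hp k.cast_nonneg)).mono (by unfold heatSymbol; fun_prop) (ae_of_all _ fun a => ?_)
  rw [rpow_add_of_nonneg (abs_nonneg _) hp k.cast_nonneg, rpow_natCast]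
  simp only [heatSymbol, norm_mul, norm_pow, Real.norm_eq_abs, abs_abs, neg_mul, mul_assoc, le_refl]

theorem integrable_heatSymbol (hm : ∀ t > 0, Integrable (heatSymbol m 0 t) ν) (k : ℕ) {t : ℝ}
    (ht : 0 < t) : Integrable (heatSymbol m k t) ν := by
  simpa using integrable_rpow_abs_mul_heatSymbol hm le_rfl k ht

theorem hasDerivAt_integral_heatSymbol_smul [NormedAddCommGroup F] [NormedSpace ℝ F]
    (hm0 : ∀ a, 0 ≤ m a) (hm : ∀ t > 0, Integrable (heatSymbol m 0 t) ν) {g : α → F} {C : ℝ}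
    (hg : AEStronglyMeasurable g ν) (hgC : ∀ a, ‖g a‖ ≤ C) (k : ℕ) {t : ℝ} (ht : 0 < t) :
    HasDerivAt (fun s => ∫ a, heatSymbol m k s a • g a ∂ν)
      (-∫ a, heatSymbol m (k + 1) t a • g a ∂ν) t := by
  have hint (j : ℕ) {s : ℝ} (hs : 0 < s) : Integrable (fun a => heatSymbol m j s a • g a) ν :=
    (integrable_heatSymbol hm j hs).smul_bdd C hg (ae_of_all _ hgC)
  have hderiv := hasDerivAt_integral_of_dominated_loc_of_deriv_le (μ := ν)
    (F := fun s a => heatSymbol m k s a • g a)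
    (F' := fun s a => -heatSymbol m (k + 1) s a • g a)
    (bound := fun a => heatSymbol m (k + 1) (t / 2) a * C) (Ioi_mem_nhds (half_lt_self ht))
    ((eventually_gt_nhds ht).mono fun s hs => (hint k hs).aestronglyMeasurable) (hint k ht)
    (by simpa only [neg_smul] using (hint (k + 1) ht).fun_neg.aestronglyMeasurable)
    (ae_of_all _ fun a s hs => ?_) ((integrable_heatSymbol hm _ (half_pos ht)).mul_const C)
    (ae_of_all _ fun a s _ => (hasDerivAt_heatSymbol m k s a).smul_const (g a))
  · simpa only [neg_smul, integral_neg] using hderiv.2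
  · rw [norm_smul, norm_neg, Real.norm_of_nonneg (heatSymbol_nonneg (hm0 a) _ _)]
    exact mul_le_mul (heatSymbol_anti (hm0 a) _ (le_of_lt hs)) (hgC a) (norm_nonneg _)
      (heatSymbol_nonneg (hm0 a) _ _)

end HeatSymbol

section EllipticSymbol

variable {E : Type*} [NormedAddCommGroup E] [NormedSpace ℝ E] [MeasurableSpace E]

/-- A measurable symbol that is positively homogeneous of degree `σ > 0` and coercive, as are the
symbols of non-degenerate `σ`-stable operators. -/
structure IsEllipticSymbol (σ : ℝ) (m : E → ℝ) : Prop where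
  order_pos : 0 < σ
  measurable : Measurable m
  map_smul : ∀ {t : ℝ}, 0 < t → ∀ ξ, m (t • ξ) = t ^ σ * m ξ
  exists_mul_norm_rpow_le : ∃ c > 0, ∀ ξ, c * ‖ξ‖ ^ σ ≤ m ξ

namespace IsEllipticSymbol

variable {σ : ℝ} {m : E → ℝ} (hm : IsEllipticSymbol σ m)

include hm

theorem nonneg (ξ : E) : 0 ≤ m ξ := by
  obtain ⟨c, hc, hle⟩ := hm.exists_mul_norm_rpow_le
  exact le_trans (by positivity) (hle ξ)

theorem exists_norm_le_mul_rpow : ∃ C, ∀ ξ, ‖ξ‖ ≤ C * m ξ ^ σ⁻¹ := by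
  obtain ⟨c, hc, hle⟩ := hm.exists_mul_norm_rpow_le
  refine ⟨c⁻¹ ^ σ⁻¹, fun ξ => ?_⟩
  rw [← mul_rpow (inv_nonneg.2 hc.le) (hm.nonneg ξ),
    le_rpow_inv_iff_of_pos (norm_nonneg ξ) (by have := hm.nonneg ξ; positivity) hm.order_pos]
  exact (le_inv_mul_iff₀ hc).2 (hle ξ)

theorem heatSymbol_eq_rpow_mul (k : ℕ) {t : ℝ} (ht : 0 < t) (ξ : E) :
    heatSymbol m k t ξ = t ^ (-k : ℝ) * heatSymbol m k 1 (t ^ σ⁻¹ • ξ) := by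
  have hdil : m (t ^ σ⁻¹ • ξ) = t * m ξ := by
    rw [hm.map_smul (rpow_pos_of_pos ht _), rpow_inv_rpow ht.le hm.order_pos.ne']
  rw [heatSymbol, heatSymbol, hdil, rpow_neg ht.le, rpow_natCast, mul_pow, one_mul, mul_assoc,
    inv_mul_cancel_left₀ (pow_pos ht k).ne']

end IsEllipticSymbol

variable [FiniteDimensional ℝ E] [BorelSpace E] {ν : Measure E} [ν.IsAddHaarMeasure]

theorem integrable_exp_neg_mul_norm_rpow {σ c : ℝ} (hσ : 0 < σ) (hc : 0 < c) :
    Integrable (fun ξ : E => Real.exp (-c * ‖ξ‖ ^ σ)) ν := by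
  cases subsingleton_or_nontrivial E
  · exact .of_finite
  rw [integrable_fun_norm_addHaar ν (f := fun r => Real.exp (-c * r ^ σ))]
  have hdim : (-1 : ℝ) < (Module.finrank ℝ E - 1 : ℕ) :=
    neg_one_lt_zero.trans_le (Nat.cast_nonneg _)
  simpa only [smul_eq_mul, rpow_natCast] using integrableOn_rpow_mul_exp_neg_mul_rpow hdim hσ hc

namespace IsEllipticSymbol

variable {σ : ℝ} {m : E → ℝ} (hm : IsEllipticSymbol σ m)

include hm

theorem integrable_heatSymbol_zero (t : ℝ) (ht : 0 < t) : Integrable (heatSymbol m 0 t) ν := by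
  obtain ⟨c, hc, hle⟩ := hm.exists_mul_norm_rpow_le
  have hmeas := hm.measurable
  refine (integrable_exp_neg_mul_norm_rpow hm.order_pos (mul_pos ht hc)).mono'
    (by unfold heatSymbol; fun_prop) (ae_of_all _ fun ξ => ?_)
  rw [heatSymbol_zero, Real.norm_of_nonneg (Real.exp_pos _).le, neg_mul, mul_assoc]
  gcongr
  exact hle ξ

theorem integrable_heatSymbol (k : ℕ) {t : ℝ} (ht : 0 < t) : Integrable (heatSymbol m k t) ν :=
  _root_.integrable_heatSymbol hm.integrable_heatSymbol_zero k ht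

theorem integrable_norm_mul_heatSymbol (k : ℕ) {t : ℝ} (ht : 0 < t) :
    Integrable (fun ξ => ‖ξ‖ * ‖heatSymbol m k t ξ‖) ν := by
  obtain ⟨C, hC⟩ := hm.exists_norm_le_mul_rpow
  have hmoment := integrable_rpow_abs_mul_heatSymbol (ν := ν) hm.integrable_heatSymbol_zero
    (inv_nonneg.2 hm.order_pos.le) k ht
  have hmeas := (hm.integrable_heatSymbol (ν := ν) k ht).aestronglyMeasurable
  refine (hmoment.const_mul C).mono' (by fun_prop) (ae_of_all _ fun ξ => ?_)
  have hsymb := heatSymbol_nonneg (hm.nonneg ξ) k t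
  rw [norm_mul, norm_norm, norm_norm, Real.norm_of_nonneg hsymb, abs_of_nonneg (hm.nonneg ξ),
    ← mul_assoc]
  gcongr
  exact hC ξ

end IsEllipticSymbol

end EllipticSymbol

section Fourier

open scoped FourierTransform

variable {E : Type*} [NormedAddCommGroup E] [InnerProductSpace ℝ E] [FiniteDimensional ℝ E]
  [MeasurableSpace E] [BorelSpace E]

/-- The transform `x ↦ ∫ f(ξ) e^{i x·ξ} dξ` of a real function `f`, with the phase `x·ξ` used in
`LkPhi` instead of the phase `2π x·ξ` of `𝓕⁻`. -/
def unnormalizedFourierInv (f : E → ℝ) (x : E) : ℂ :=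
  ∫ ξ, f ξ • Complex.exp (Complex.I * (⟪x, ξ⟫_ℝ : ℂ))

theorem differentiable_unnormalizedFourierInv {f : E → ℝ} (hf : Integrable f)
    (hf' : Integrable fun ξ => ‖ξ‖ * ‖f ξ‖) : Differentiable ℝ (unnormalizedFourierInv f) := by
  have heq : unnormalizedFourierInv f = VectorFourier.fourierIntegral 𝐞 volume
      (-(2 * π)⁻¹ • innerSL ℝ (E := E)).toLinearMap₁₂ fun ξ => (f ξ : ℂ) := by
    funext x
    refine integral_congr_ae (ae_of_all _ fun ξ => ?_)
    have hphase : 2 * π * ((2 * π)⁻¹ * ⟪ξ, x⟫_ℝ) = ⟪x, ξ⟫_ℝ := by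
      rw [mul_inv_cancel_left₀ two_pi_pos.ne', real_inner_comm]
    simp [Circle.smul_def, Real.fourierChar_apply, ← hphase, mul_comm]
  rw [heq]
  exact VectorFourier.differentiable_fourierIntegral _ hf.ofReal (by simpa using hf')

theorem unnormalizedFourierInv_comp_smul (f : E → ℝ) {t : ℝ} (ht : 0 < t) (x : E) :
    unnormalizedFourierInv (fun ξ => f (t • ξ)) x =
      (t ^ Module.finrank ℝ E)⁻¹ • unnormalizedFourierInv f (t⁻¹ • x) := by
  rw [unnormalizedFourierInv, unnormalizedFourierInv,
    ← Measure.integral_comp_smul_of_nonneg volume _ t (hR := ht.le)]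
  simp only [real_inner_smul_left, real_inner_smul_right, mul_inv_cancel_left₀ ht.ne']

/-- The kernel `𝓛^k P(x, t)` of `𝓛^k e^{-t𝓛}` for the operator `𝓛` with symbol `m`: for `k = 0` the
heat kernel of `𝓛`, and for `t = 1` its profile `𝓛^k Φ`. -/
def symbolHeatKernel (m : E → ℝ) (k : ℕ) (t : ℝ) (x : E) : ℝ :=
  (2 * π) ^ (-(Module.finrank ℝ E : ℝ)) * (unnormalizedFourierInv (heatSymbol m k t) x).re

namespace IsEllipticSymbol

variable {σ : ℝ} {m : E → ℝ} (hm : IsEllipticSymbol σ m)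

include hm

theorem differentiable_symbolHeatKernel (k : ℕ) {t : ℝ} (ht : 0 < t) :
    Differentiable ℝ (symbolHeatKernel m k t) :=
  (Complex.reCLM.differentiable.comp (differentiable_unnormalizedFourierInv
    (hm.integrable_heatSymbol k ht) (hm.integrable_norm_mul_heatSymbol k ht))).const_mul _

theorem hasDerivAt_symbolHeatKernel (k : ℕ) {t : ℝ} (ht : 0 < t) (x : E) :
    HasDerivAt (fun s => symbolHeatKernel m k s x) (-symbolHeatKernel m (k + 1) t x) t := by
  have hnorm (ξ : E) : ‖Complex.exp (Complex.I * (⟪x, ξ⟫_ℝ : ℂ))‖ ≤ 1 := by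
    rw [mul_comm, Complex.norm_exp_ofReal_mul_I]
  have h : HasDerivAt (fun s => unnormalizedFourierInv (heatSymbol m k s) x)
      (-unnormalizedFourierInv (heatSymbol m (k + 1) t) x) t :=
    hasDerivAt_integral_heatSymbol_smul hm.nonneg hm.integrable_heatSymbol_zero
      (by fun_prop) hnorm k ht
  refine ((Complex.reCLM.hasFDerivAt.comp_hasDerivAt t h).const_mul _).congr_deriv ?_
  simp only [symbolHeatKernel, map_neg, mul_neg, Complex.reCLM_apply]

theorem symbolHeatKernel_eq_rpow_mul (k : ℕ) {t : ℝ} (ht : 0 < t) (x : E) :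
    symbolHeatKernel m k t x =
      t ^ (-(Module.finrank ℝ E / σ + k)) * symbolHeatKernel m k 1 (t ^ (-σ⁻¹) • x) := by
  have hscale : 0 < t ^ σ⁻¹ := rpow_pos_of_pos ht _
  have hpow : t ^ (-(Module.finrank ℝ E / σ + k)) =
      t ^ (-k : ℝ) * ((t ^ σ⁻¹) ^ Module.finrank ℝ E)⁻¹ := by
    rw [← rpow_mul_natCast ht.le, ← rpow_neg ht.le, ← rpow_add ht]
    ring_nf
  have hfourier : unnormalizedFourierInv (heatSymbol m k t) x = t ^ (-k : ℝ) •
      unnormalizedFourierInv (fun ξ => heatSymbol m k 1 (t ^ σ⁻¹ • ξ)) x := by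
    simp only [unnormalizedFourierInv, hm.heatSymbol_eq_rpow_mul k ht, mul_smul, integral_smul]
  rw [symbolHeatKernel, symbolHeatKernel, hfourier, unnormalizedFourierInv_comp_smul _ hscale,
    smul_smul, Complex.smul_re, smul_eq_mul, rpow_neg ht.le σ⁻¹, hpow]
  ring

end IsEllipticSymbol

theorem hasDerivAt_rpow_mul_comp_rpow_smul {V : Type*} [NormedAddCommGroup V] [NormedSpace ℝ V]
    {f : V → ℝ} {x : V} (hf : DifferentiableAt ℝ f x) (a b : ℝ) :
    HasDerivAt (fun t : ℝ => t ^ a * f (t ^ b • x)) (a * f x + b * fderiv ℝ f x x) 1 := by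
  have hpow (p : ℝ) : HasDerivAt (fun t : ℝ => t ^ p) p 1 := by
    simpa using Real.hasDerivAt_rpow_const (x := 1) (p := p) (Or.inl one_ne_zero)
  have hcomp : HasDerivAt (fun t : ℝ => f (t ^ b • x)) (fderiv ℝ f x (b • x)) 1 :=
    hf.hasFDerivAt.comp_hasDerivAt_of_eq 1 ((hpow b).smul_const x) (by simp)
  simpa using (hpow a).fun_mul hcomp

theorem stmt18_general {σ : ℝ} {m : E → ℝ} (hm : IsEllipticSymbol σ m) (k : ℕ) (x : E) :
    σ * symbolHeatKernel m (k + 1) 1 x =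
      (Module.finrank ℝ E + k * σ) * symbolHeatKernel m k 1 x +
        fderiv ℝ (symbolHeatKernel m k 1) x x := by
  have htime := hm.hasDerivAt_symbolHeatKernel k one_pos x
  have hscaling := hasDerivAt_rpow_mul_comp_rpow_smul
    (hm.differentiable_symbolHeatKernel k one_pos x) (-(Module.finrank ℝ E / σ + k)) (-σ⁻¹)
  have hselfsimilar := (eventually_gt_nhds one_pos).mono fun t ht =>
    hm.symbolHeatKernel_eq_rpow_mul k ht x
  have heq := htime.unique (hscaling.congr_of_eventuallyEq hselfsimilar)
  have hσ := hm.order_pos.ne'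
  field_simp at heq
  linear_combination -heq

end Fourier

section StableSymbol

variable {σ : ℝ}

/-- The constant `∫_0^∞ (1 − cos r) r^{−1−σ} dr`, which is the ratio of the symbol of `𝓛` to
`∫ |ξ·θ|^σ dμ(θ)`. -/
def stableConst (σ : ℝ) : ℝ :=
  ∫ r in Ioi (0 : ℝ), (1 - Real.cos r) * r ^ (-1 - σ)

theorem integrableOn_one_sub_cos_mul_rpow (hσ0 : 0 < σ) (hσ2 : σ < 2) :
    IntegrableOn (fun r : ℝ => (1 - Real.cos r) * r ^ (-1 - σ)) (Ioi 0) := by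
  have hcont : Continuous fun r : ℝ => 1 - Real.cos r := by fun_prop
  have htop : (fun r : ℝ => 1 - Real.cos r) =O[Filter.atTop] (· ^ (-0 : ℝ)) := by
    refine .of_bound 2 (.of_forall fun r => ?_)
    rw [neg_zero, rpow_zero, norm_one, mul_one, Real.norm_eq_abs, abs_le]
    constructor <;> linarith [Real.cos_le_one r, Real.neg_one_le_cos r]
  have hbot : (fun r : ℝ => 1 - Real.cos r) =O[nhdsWithin 0 (Ioi 0)] (· ^ (-(-2) : ℝ)) := by
    refine .of_bound 2⁻¹ (.of_forall fun r => ?_)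
    rw [neg_neg, rpow_two, norm_pow, Real.norm_eq_abs r, sq_abs,
      Real.norm_of_nonneg (sub_nonneg.2 (Real.cos_le_one r))]
    linarith [Real.one_sub_sq_div_two_le_cos (x := r)]
  convert mellin_convergent_of_isBigO_scalar (s := -σ)
    (hcont.locallyIntegrable.locallyIntegrableOn _) htop (by linarith)
    hbot (by linarith) using 2 with r
  rw [mul_comm, neg_sub_left, neg_add']

theorem stableConst_pos (hσ0 : 0 < σ) (hσ2 : σ < 2) : 0 < stableConst σ := by
  have hnonneg (r : ℝ) (hr : r ∈ Ioi 0) : 0 ≤ (1 - Real.cos r) * r ^ (-1 - σ) :=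
    mul_nonneg (sub_nonneg.2 (Real.cos_le_one r)) (rpow_nonneg (le_of_lt hr) _)
  rw [stableConst, setIntegral_pos_iff_support_of_nonneg_ae
    (ae_restrict_of_forall_mem measurableSet_Ioi hnonneg)
    (integrableOn_one_sub_cos_mul_rpow hσ0 hσ2)]
  have hsupport : Ioo (0 : ℝ) 1 ⊆
      Function.support (fun r : ℝ => (1 - Real.cos r) * r ^ (-1 - σ)) ∩ Ioi 0 := by
    rintro r ⟨hr0, hr1⟩
    have hcos : Real.cos r < 1 := by
      simpa using Real.cos_lt_cos_of_nonneg_of_le_pi le_rfl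
        (hr1.le.trans (by linarith [Real.pi_gt_three])) hr0
    exact ⟨(mul_pos (sub_pos.2 hcos) (rpow_pos_of_pos hr0 _)).ne', hr0⟩
  exact (by simp : 0 < volume (Ioo (0 : ℝ) 1)).trans_le (measure_mono hsupport)

theorem integral_one_sub_cos_mul_mul_rpow (hσ0 : 0 < σ) (a : ℝ) :
    ∫ r in Ioi (0 : ℝ), (1 - Real.cos (r * a)) * r ^ (-1 - σ) = |a| ^ σ * stableConst σ := by
  rcases eq_or_ne a 0 with rfl | ha
  · simp [zero_rpow hσ0.ne']
  have ha' : 0 < |a| := abs_pos.2 ha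
  have hpow : |a| ^ σ = |a| ^ (1 + σ) * |a|⁻¹ := by
    rw [rpow_one_add' ha'.le (by linarith)]
    field_simp
  rw [hpow, mul_assoc, stableConst, ← smul_eq_mul (a := |a|⁻¹)]
  conv_rhs => rw [← mul_zero |a|]
  rw [← integral_comp_mul_left_Ioi _ 0 ha', ← integral_const_mul]
  refine setIntegral_congr_fun measurableSet_Ioi fun r hr => ?_
  have hcos : Real.cos (|a| * r) = Real.cos (r * a) := by
    rw [← Real.cos_abs (r * a), abs_mul, abs_of_pos (mem_Ioi.1 hr), mul_comm]
  have hcancel : |a| ^ (1 + σ) * |a| ^ (-1 - σ) = 1 := by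
    rw [← neg_add', rpow_neg ha'.le, mul_inv_cancel₀ (rpow_pos_of_pos ha' _).ne']
  simp only [hcos, mul_rpow ha'.le (le_of_lt (mem_Ioi.1 hr))]
  linear_combination (-(1 - Real.cos (r * a)) * r ^ (-1 - σ)) * hcancel

variable {N : ℕ} {μ : Measure (Sph N)}

theorem symb_eq_stableConst_mul_integral (hσ0 : 0 < σ) (ξ : Eu N) :
    symb N σ μ ξ = stableConst σ * ∫ θ : Sph N, |⟪ξ, (θ : Eu N)⟫_ℝ| ^ σ ∂μ := by
  simp only [symb, integral_one_sub_cos_mul_mul_rpow hσ0, integral_mul_const]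
  exact mul_comm _ _

theorem symb_smul (hσ0 : 0 < σ) {t : ℝ} (ht : 0 ≤ t) (ξ : Eu N) :
    symb N σ μ (t • ξ) = t ^ σ * symb N σ μ ξ := by
  simp only [symb_eq_stableConst_mul_integral hσ0, real_inner_smul_left, abs_mul, abs_of_nonneg ht,
    mul_rpow ht (abs_nonneg _), integral_const_mul]
  ring

theorem measurable_symb (hσ0 : 0 < σ) [SFinite μ] : Measurable (symb N σ μ) := by
  have hcont : Continuous fun p : Eu N × Sph N => |⟪p.1, (p.2 : Eu N)⟫_ℝ| ^ σ :=
    Continuous.rpow_const (by fun_prop) fun _ => Or.inr hσ0.le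
  rw [funext (symb_eq_stableConst_mul_integral hσ0)]
  exact hcont.stronglyMeasurable.integral_prod_right.measurable.const_mul _

theorem Elliptic.mul_norm_rpow_le_symb {lam : ℝ} (hell : Elliptic N σ μ lam) (hσ0 : 0 < σ)
    (hσ2 : σ < 2) (ξ : Eu N) : stableConst σ * lam * ‖ξ‖ ^ σ ≤ symb N σ μ ξ := by
  rcases eq_or_ne ξ 0 with rfl | hξ
  · have hsymb : symb N σ μ 0 = 0 := by simp [symb]
    simp [hsymb, zero_rpow hσ0.ne']
  have hnorm : 0 < ‖ξ‖ := norm_pos_iff.2 hξ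
  have hunit : ‖ξ‖⁻¹ • ξ ∈ sphere (0 : Eu N) 1 := by
    rw [mem_sphere_zero_iff_norm, norm_smul, norm_inv, norm_norm, inv_mul_cancel₀ hnorm.ne']
  have hpos := stableConst_pos hσ0 hσ2
  calc stableConst σ * lam * ‖ξ‖ ^ σ
      ≤ (stableConst σ * ∫ θ : Sph N, |⟪‖ξ‖⁻¹ • ξ, (θ : Eu N)⟫_ℝ| ^ σ ∂μ) * ‖ξ‖ ^ σ := by
        gcongr
        exact hell ⟨_, hunit⟩
    _ = symb N σ μ ξ := by
        rw [← symb_eq_stableConst_mul_integral hσ0, mul_comm, ← symb_smul hσ0 hnorm.le,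
          smul_inv_smul₀ hnorm.ne']

theorem Elliptic.isEllipticSymbol_symb [SFinite μ] {lam : ℝ} (hell : Elliptic N σ μ lam)
    (hσ0 : 0 < σ) (hσ2 : σ < 2) (hlam : 0 < lam) : IsEllipticSymbol σ (symb N σ μ) where
  order_pos := hσ0
  measurable := measurable_symb hσ0
  map_smul ht := symb_smul hσ0 ht.le
  exists_mul_norm_rpow_le :=
    ⟨_, mul_pos (stableConst_pos hσ0 hσ2) hlam, hell.mul_norm_rpow_le_symb hσ0 hσ2⟩

theorem LkPhi_eq_symbolHeatKernel (k : ℕ) :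
    LkPhi N σ μ k = symbolHeatKernel (symb N σ μ) k 1 := by
  funext x
  simp [LkPhi, symbolHeatKernel, unnormalizedFourierInv, heatSymbol]

end StableSymbol

/-- The equation satisfied by the profile:
`σ 𝓛Φ(x) = N Φ(x) + x·∇Φ(x)`. -/
theorem stmt18 (N : ℕ) (hN : 1 ≤ N) (σ : ℝ) (hσ0 : 0 < σ) (hσ2 : σ < 2)
    (μ : Measure (Sph N)) [IsFiniteMeasure μ]
    (lam : ℝ) (hlam : 0 < lam) (hell : Elliptic N σ μ lam) (x : Eu N) :
    σ * LkPhi N σ μ 1 x = N * LkPhi N σ μ 0 x + fderiv ℝ (LkPhi N σ μ 0) x x := by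
  simpa [LkPhi_eq_symbolHeatKernel] using
    stmt18_general (hell.isEllipticSymbol_symb hσ0 hσ2 hlam) 0 x
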